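/- Every separable permutation π (i.e., every π ∈ H(2)) satisfies des(π) = ides(π). -/

import Mathlib

/-!
The proof is by induction on the construction of a separable permutation. Inversion commutes with
direct sums, `(π ⊕ τ)⁻¹ = π⁻¹ ⊕ τ⁻¹`, and swaps the summands of a skew sum,
`(π ⊖ τ)⁻¹ = τ⁻¹ ⊖ π⁻¹`. On the other hand `des (π ⊕ τ) = des π + des τ`, because the junction of
the two blocks is an ascent, while `des (π ⊖ τ) = des π + des τ + 1` for nonempty blocks, because
the junction is a descent. Both expressions are symmetric in the two blocks, so the equality
`des = ides` passes from the summands to the sums.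
-/

/-- The number of descents of a permutation of `Fin n`. -/
def des {n : ℕ} (π : Equiv.Perm (Fin n)) : ℕ :=
  (Finset.univ.filter (fun p : Fin n × Fin n =>
    (p.2 : ℕ) = (p.1 : ℕ) + 1 ∧ π p.2 < π p.1)).card

/-- The number of descents of the inverse permutation. -/
def ides {n : ℕ} (π : Equiv.Perm (Fin n)) : ℕ := des π⁻¹

/-- The direct sum `π ⊕ τ` of permutations: `(π ⊕ τ) i = π i` for `i < m`
and `(π ⊕ τ) (m + j) = m + τ j`. -/
def directSum {m k : ℕ} (π : Equiv.Perm (Fin m)) (τ : Equiv.Perm (Fin k)) :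
    Equiv.Perm (Fin (m + k)) :=
  finSumFinEquiv.permCongr (Equiv.sumCongr π τ)

/-- The skew sum `π ⊖ τ` of permutations: `(π ⊖ τ) i = k + π i` for `i < m`
and `(π ⊖ τ) (m + j) = τ j`. -/
def skewSum {m k : ℕ} (π : Equiv.Perm (Fin m)) (τ : Equiv.Perm (Fin k)) :
    Equiv.Perm (Fin (m + k)) :=
  (finSumFinEquiv.symm.trans
    ((Equiv.sumCongr π τ).trans (Equiv.sumComm (Fin m) (Fin k)))).trans
    (finSumFinEquiv.trans (finCongr (Nat.add_comm k m)))

/-- The separable permutations (the class `H(2)`): the smallest class of permutations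
containing the trivial permutation of length 1 and closed under direct sums and
skew sums. -/
inductive Separable : {n : ℕ} → Equiv.Perm (Fin n) → Prop
  | one : Separable (1 : Equiv.Perm (Fin 1))
  | dsum {m k : ℕ} {π : Equiv.Perm (Fin m)} {τ : Equiv.Perm (Fin k)} :
      Separable π → Separable τ → Separable (directSum π τ)
  | ssum {m k : ℕ} {π : Equiv.Perm (Fin m)} {τ : Equiv.Perm (Fin k)} :
      Separable π → Separable τ → Separable (skewSum π τ)

theorem directSum_castAdd {m k : ℕ} (π : Equiv.Perm (Fin m)) (τ : Equiv.Perm (Fin k)) (i : Fin m) :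
    directSum π τ (Fin.castAdd k i) = Fin.castAdd k (π i) := by
  simp [directSum, Equiv.permCongr_apply]

theorem directSum_natAdd {m k : ℕ} (π : Equiv.Perm (Fin m)) (τ : Equiv.Perm (Fin k)) (j : Fin k) :
    directSum π τ (Fin.natAdd m j) = Fin.natAdd m (τ j) := by
  simp [directSum, Equiv.permCongr_apply]

theorem skewSum_castAdd {m k : ℕ} (π : Equiv.Perm (Fin m)) (τ : Equiv.Perm (Fin k)) (i : Fin m) :
    skewSum π τ (Fin.castAdd k i) = Fin.cast (Nat.add_comm k m) (Fin.natAdd k (π i)) := by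
  simp [skewSum]

theorem skewSum_natAdd {m k : ℕ} (π : Equiv.Perm (Fin m)) (τ : Equiv.Perm (Fin k)) (j : Fin k) :
    skewSum π τ (Fin.natAdd m j) = Fin.cast (Nat.add_comm k m) (Fin.castAdd m (τ j)) := by
  simp [skewSum]

theorem des_eq_sum {n : ℕ} (π : Equiv.Perm (Fin n)) :
    des π = ∑ i : Fin n, ∑ j : Fin n, if (j : ℕ) = (i : ℕ) + 1 ∧ π j < π i then 1 else 0 := by
  rw [des, Finset.card_filter, Fintype.sum_prod_type]

theorem des_directSum {m k : ℕ} (π : Equiv.Perm (Fin m)) (τ : Equiv.Perm (Fin k)) :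
    des (directSum π τ) = des π + des τ := by
  simp only [des_eq_sum, Fin.sum_univ_add, directSum_castAdd, directSum_natAdd,
    Finset.sum_add_distrib]
  -- The two mixed blocks of the double sum vanish.
  have h1 : ∀ (i : Fin m) (j : Fin k), ¬ (((Fin.natAdd m j : Fin (m + k)) : ℕ) =
      (Fin.castAdd k i : ℕ) + 1 ∧ Fin.natAdd m (τ j) < Fin.castAdd k (π i)) := by
    intro i j
    simp only [Fin.lt_def, Fin.val_natAdd, Fin.val_castAdd]
    omega
  have h2 : ∀ (j : Fin k) (i : Fin m), ¬ (((Fin.castAdd k i : Fin (m + k)) : ℕ) =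
      (Fin.natAdd m j : ℕ) + 1 ∧ Fin.castAdd k (π i) < Fin.natAdd m (τ j)) := by
    intro j i
    simp only [Fin.lt_def, Fin.val_natAdd, Fin.val_castAdd]
    omega
  simp only [h1, h2, if_false, Finset.sum_const_zero, add_zero, zero_add]
  simp only [Fin.lt_def, Fin.val_natAdd, Fin.val_castAdd, add_assoc, add_lt_add_iff_left,
    add_right_inj]

/-- The number of positions `(i, j)` at which a block of length `m` is adjacent to the following
block of length `k`: one if both blocks are nonempty, and none otherwise. -/
theorem sum_junction (m k : ℕ) :
    (∑ i : Fin m, ∑ j : Fin k, if m + (j : ℕ) = (i : ℕ) + 1 then 1 else 0) =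
      if 0 < m ∧ 0 < k then 1 else 0 := by
  rcases m with _ | m
  · simp
  rcases k with _ | k
  · simp
  have h : ∀ (i : Fin (m + 1)) (j : Fin (k + 1)),
      (m + 1 + (j : ℕ) = (i : ℕ) + 1) ↔ (j = 0 ∧ i = Fin.last m) := by
    intro i j
    simp only [Fin.ext_iff, Fin.val_last, Fin.val_zero]
    omega
  simp [h, ite_and]

theorem des_skewSum {m k : ℕ} (π : Equiv.Perm (Fin m)) (τ : Equiv.Perm (Fin k)) :
    des (skewSum π τ) = des π + des τ + if 0 < m ∧ 0 < k then 1 else 0 := by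
  rw [← sum_junction]
  simp only [des_eq_sum, Fin.sum_univ_add, skewSum_castAdd, skewSum_natAdd,
    Finset.sum_add_distrib]
  -- The descent condition is automatic across the junction, and the reversed block is empty.
  have h1 : ∀ (i : Fin m) (j : Fin k), (((Fin.natAdd m j : Fin (m + k)) : ℕ) =
      (Fin.castAdd k i : ℕ) + 1 ∧ Fin.cast (Nat.add_comm k m) (Fin.castAdd m (τ j)) <
        Fin.cast (Nat.add_comm k m) (Fin.natAdd k (π i))) ↔ m + (j : ℕ) = (i : ℕ) + 1 := by
    intro i j
    simp only [Fin.lt_def, Fin.val_natAdd, Fin.val_castAdd, Fin.val_cast]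
    omega
  have h2 : ∀ (j : Fin k) (i : Fin m), ¬ (((Fin.castAdd k i : Fin (m + k)) : ℕ) =
      (Fin.natAdd m j : ℕ) + 1 ∧ Fin.cast (Nat.add_comm k m) (Fin.natAdd k (π i)) <
        Fin.cast (Nat.add_comm k m) (Fin.castAdd m (τ j))) := by
    intro j i
    simp only [Fin.lt_def, Fin.val_natAdd, Fin.val_castAdd, Fin.val_cast]
    omega
  simp only [h1, h2, if_false, Finset.sum_const_zero]
  simp only [Fin.lt_def, Fin.val_natAdd, Fin.val_castAdd, Fin.val_cast, add_assoc,
    add_lt_add_iff_left, add_right_inj]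
  omega

theorem directSum_inv {m k : ℕ} (π : Equiv.Perm (Fin m)) (τ : Equiv.Perm (Fin k)) :
    (directSum π τ)⁻¹ = directSum π⁻¹ τ⁻¹ := by
  rw [inv_eq_iff_mul_eq_one]
  ext x
  induction x using Fin.addCases <;> simp [directSum_castAdd, directSum_natAdd]

/-- Inversion swaps the blocks of a skew sum. As the swapped sum permutes `Fin (k + m)`, it has to
be transported to `Fin (m + k)`. -/
theorem skewSum_inv {m k : ℕ} (π : Equiv.Perm (Fin m)) (τ : Equiv.Perm (Fin k)) :
    (skewSum π τ)⁻¹ = (finCongr (Nat.add_comm k m)).permCongr (skewSum τ⁻¹ π⁻¹) := by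
  symm
  rw [eq_inv_iff_mul_eq_one]
  ext x
  induction x using Fin.addCases <;>
    simp [skewSum_castAdd, skewSum_natAdd, Equiv.permCongr_apply]

theorem des_permCongr_finCongr {m n : ℕ} (h : m = n) (π : Equiv.Perm (Fin m)) :
    des ((finCongr h).permCongr π) = des π := by
  subst h
  rfl

/-- Every separable permutation has the same number of descents as its inverse. -/
theorem stmt8 (n : ℕ) (π : Equiv.Perm (Fin n)) (h : Separable π) : des π = ides π := by
  unfold ides
  induction h with
  | one => simp
  | dsum _ _ ihπ ihτ => rw [directSum_inv, des_directSum, des_directSum, ihπ, ihτ]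
  | ssum _ _ ihπ ihτ =>
    rw [skewSum_inv, des_permCongr_finCongr, des_skewSum, des_skewSum, ihπ, ihτ,
      add_comm (des _) (des _)]
    simp only [and_comm]
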